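/- arXiv:1705.08074 — 2 statements merged into one kernel-verified Lean document; each statement's English description precedes it below -/
import Mathlib

section
/- Let y* be the maximum of q*_η over all measures η. A measure ξ is universally optimal if and only if for every generalized inverse G of C_{ξ11} one has C_{ξ00} − C_{ξ01}GC_{ξ10} = y* · B_t/(t−1). -/
open Matrix

namespace TwoDim

/-- The set of plots of an `a × b` block. -/
abbrev Plot (a b : ℕ) := Fin a × Fin b

/-- A block array: an assignment of one of `t` treatments to each plot. -/
abbrev BlockArray (a b t : ℕ) := Plot a b → Fin t

/-- The all-ones matrix. -/
def Jmat (n : Type*) : Matrix n n ℝ := Matrix.of fun _ _ => 1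

/-- `B_m = I - J/m`. -/
noncomputable def Bmat (n : Type*) [Fintype n] [DecidableEq n] : Matrix n n ℝ :=
  1 - ((Fintype.card n : ℝ))⁻¹ • Jmat n

variable {a b t : ℕ}

/-- The treatment incidence matrix `T_s`. -/
def Tmat (s : BlockArray a b t) : Matrix (Plot a b) (Fin t) ℝ :=
  Matrix.of fun q k => if s q = k then 1 else 0

/-- Two plots are neighbors if they agree in one coordinate and differ by 1 in the other. -/
def Neighbor (q r : Plot a b) : Prop :=
  (q.1 = r.1 ∧ (q.2.val + 1 = r.2.val ∨ r.2.val + 1 = q.2.val)) ∨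
  (q.2 = r.2 ∧ (q.1.val + 1 = r.1.val ∨ r.1.val + 1 = q.1.val))

instance (q r : Plot a b) : Decidable (Neighbor q r) := by
  unfold Neighbor; infer_instance

/-- The adjacency matrix of the neighbor relation. -/
def Mmat (a b : ℕ) : Matrix (Plot a b) (Plot a b) ℝ :=
  Matrix.of fun q r => if Neighbor q r then 1 else 0

/-- `F_s = M T_s`. -/
def Fmat (s : BlockArray a b t) : Matrix (Plot a b) (Fin t) ℝ :=
  Mmat a b * Tmat s

/-- `B̃ = Σ⁻¹ − Σ⁻¹ J Σ⁻¹ / (1'Σ⁻¹1)`. -/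
noncomputable def Btilde (Sig : Matrix (Plot a b) (Plot a b) ℝ) :
    Matrix (Plot a b) (Plot a b) ℝ :=
  Sig⁻¹ - (∑ i, ∑ j, Sig⁻¹ i j)⁻¹ • (Sig⁻¹ * Jmat (Plot a b) * Sig⁻¹)

/-- `C_{s00} = T_s' W T_s` (with `W` playing the role of `B̃`). -/
def Cs00 (W : Matrix (Plot a b) (Plot a b) ℝ) (s : BlockArray a b t) :
    Matrix (Fin t) (Fin t) ℝ := (Tmat s)ᵀ * W * Tmat s

/-- `C_{s01} = T_s' W F_s`. -/
def Cs01 (W : Matrix (Plot a b) (Plot a b) ℝ) (s : BlockArray a b t) :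
    Matrix (Fin t) (Fin t) ℝ := (Tmat s)ᵀ * W * Fmat s

/-- `C_{s11} = F_s' W F_s`. -/
def Cs11 (W : Matrix (Plot a b) (Plot a b) ℝ) (s : BlockArray a b t) :
    Matrix (Fin t) (Fin t) ℝ := (Fmat s)ᵀ * W * Fmat s

/-- `c_{s00} = tr(B_t C_{s00})`. -/
noncomputable def cs00 (W : Matrix (Plot a b) (Plot a b) ℝ) (s : BlockArray a b t) : ℝ :=
  Matrix.trace (Bmat (Fin t) * Cs00 W s)

noncomputable def cs01 (W : Matrix (Plot a b) (Plot a b) ℝ) (s : BlockArray a b t) : ℝ :=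
  Matrix.trace (Bmat (Fin t) * Cs01 W s)

noncomputable def cs11 (W : Matrix (Plot a b) (Plot a b) ℝ) (s : BlockArray a b t) : ℝ :=
  Matrix.trace (Bmat (Fin t) * Cs11 W s)

/-- The quadratic `q_s(x) = c_{s00} + 2 c_{s01} x + c_{s11} x²`. -/
noncomputable def qpoly (W : Matrix (Plot a b) (Plot a b) ℝ) (s : BlockArray a b t) (x : ℝ) : ℝ :=
  cs00 W s + 2 * cs01 W s * x + cs11 W s * x ^ 2

/-- A measure on the set of block arrays: nonnegative weights summing to one. -/
def IsMeasure (ξ : BlockArray a b t → ℝ) : Prop :=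
  (∀ s, 0 ≤ ξ s) ∧ ∑ s, ξ s = 1

noncomputable def Cm00 (W : Matrix (Plot a b) (Plot a b) ℝ) (ξ : BlockArray a b t → ℝ) :
    Matrix (Fin t) (Fin t) ℝ := ∑ s, ξ s • Cs00 W s

noncomputable def Cm01 (W : Matrix (Plot a b) (Plot a b) ℝ) (ξ : BlockArray a b t → ℝ) :
    Matrix (Fin t) (Fin t) ℝ := ∑ s, ξ s • Cs01 W s

noncomputable def Cm11 (W : Matrix (Plot a b) (Plot a b) ℝ) (ξ : BlockArray a b t → ℝ) :
    Matrix (Fin t) (Fin t) ℝ := ∑ s, ξ s • Cs11 W s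

noncomputable def cm00 (W : Matrix (Plot a b) (Plot a b) ℝ) (ξ : BlockArray a b t → ℝ) : ℝ :=
  ∑ s, ξ s * cs00 W s

noncomputable def cm01 (W : Matrix (Plot a b) (Plot a b) ℝ) (ξ : BlockArray a b t → ℝ) : ℝ :=
  ∑ s, ξ s * cs01 W s

noncomputable def cm11 (W : Matrix (Plot a b) (Plot a b) ℝ) (ξ : BlockArray a b t → ℝ) : ℝ :=
  ∑ s, ξ s * cs11 W s

/-- `q*_ξ = c_{ξ00} − c_{ξ01}²/c_{ξ11}`. -/
noncomputable def qstar (W : Matrix (Plot a b) (Plot a b) ℝ) (ξ : BlockArray a b t → ℝ) : ℝ :=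
  cm00 W ξ - (cm01 W ξ) ^ 2 / cm11 W ξ

/-- `G` is a generalized inverse of `A`. -/
def IsGenInv (A G : Matrix (Fin t) (Fin t) ℝ) : Prop := A * G * A = A

/-- Information matrix `C_{ξ00} − C_{ξ01} G C_{ξ10}` computed with a generalized inverse `G`. -/
noncomputable def InfoMat (W : Matrix (Plot a b) (Plot a b) ℝ) (ξ : BlockArray a b t → ℝ)
    (G : Matrix (Fin t) (Fin t) ℝ) : Matrix (Fin t) (Fin t) ℝ :=
  Cm00 W ξ - Cm01 W ξ * G * (Cm01 W ξ)ᵀ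

/-- A criterion `Φ` on `t×t` real symmetric matrices: concave, Loewner-nondecreasing, and
invariant under simultaneous permutations of rows and columns. -/
def GoodPhi (t : ℕ) (Φ : Matrix (Fin t) (Fin t) ℝ → ℝ) : Prop :=
  (∀ A B : Matrix (Fin t) (Fin t) ℝ, A.IsSymm → B.IsSymm → ∀ α : ℝ, 0 ≤ α → α ≤ 1 →
      α * Φ A + (1 - α) * Φ B ≤ Φ (α • A + (1 - α) • B)) ∧
  (∀ A B : Matrix (Fin t) (Fin t) ℝ, A.IsSymm → B.IsSymm → (B - A).PosSemidef → Φ A ≤ Φ B) ∧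
  (∀ (σ : Equiv.Perm (Fin t)) (C : Matrix (Fin t) (Fin t) ℝ), Φ (C.submatrix σ σ) = Φ C)

/-- Universal optimality of a measure `ξ`. -/
def UnivOptimal (W : Matrix (Plot a b) (Plot a b) ℝ) (ξ : BlockArray a b t → ℝ) : Prop :=
  ∀ η : BlockArray a b t → ℝ, IsMeasure η →
    ∀ G H : Matrix (Fin t) (Fin t) ℝ, IsGenInv (Cm11 W ξ) G → IsGenInv (Cm11 W η) H →
      ∀ Φ : Matrix (Fin t) (Fin t) ℝ → ℝ, GoodPhi t Φ →
        Φ (InfoMat W η H) ≤ Φ (InfoMat W ξ G)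

/-- A measure is symmetric if it is invariant under relabeling of the treatments. -/
def IsSymmetricMeasure (ξ : BlockArray a b t → ℝ) : Prop :=
  ∀ (σ : Equiv.Perm (Fin t)) (s : BlockArray a b t), ξ (fun q => σ (s q)) = ξ s

/-- A matrix is completely symmetric if it is of the form `αI + βJ`. -/
def ComplSym (A : Matrix (Fin t) (Fin t) ℝ) : Prop :=
  ∃ α β : ℝ, A = α • (1 : Matrix (Fin t) (Fin t) ℝ) + β • Jmat (Fin t)

/-- A measure is pseudo symmetric if `C_{ξ00}`, `C_{ξ01}`, `C_{ξ11}` are completely symmetric. -/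
def PseudoSym (W : Matrix (Plot a b) (Plot a b) ℝ) (ξ : BlockArray a b t → ℝ) : Prop :=
  ComplSym (Cm00 W ξ) ∧ ComplSym (Cm01 W ξ) ∧ ComplSym (Cm11 W ξ)

/-- `r(x) = max_{s∈S} q_s(x)`. -/
noncomputable def rfun {a b : ℕ} (t : ℕ) (W : Matrix (Plot a b) (Plot a b) ℝ) (x : ℝ) : ℝ :=
  sSup (Set.range fun s : BlockArray a b t => qpoly W s x)

/-- `min_{s∈S} q_s(x)`. -/
noncomputable def rmin {a b : ℕ} (t : ℕ) (W : Matrix (Plot a b) (Plot a b) ℝ) (x : ℝ) : ℝ :=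
  sInf (Set.range fun s : BlockArray a b t => qpoly W s x)

/-- Number of plots assigned treatment `k` by `s`. -/
noncomputable def f0 (s : BlockArray a b t) (k : Fin t) : ℕ :=
  {q : Plot a b | s q = k}.ncard

/-- Replications of `k` among the columns `1,…,b−1`. -/
noncomputable def f1 (s : BlockArray a b t) (k : Fin t) : ℕ :=
  {q : Plot a b | s q = k ∧ q.2.val + 1 < b}.ncard

/-- Replications of `k` among the columns `2,…,b`. -/
noncomputable def f2 (s : BlockArray a b t) (k : Fin t) : ℕ :=
  {q : Plot a b | s q = k ∧ 1 ≤ q.2.val}.ncard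

/-- Replications of `k` among the rows `1,…,a−1`. -/
noncomputable def f3 (s : BlockArray a b t) (k : Fin t) : ℕ :=
  {q : Plot a b | s q = k ∧ q.1.val + 1 < a}.ncard

/-- Replications of `k` among the rows `2,…,a`. -/
noncomputable def f4 (s : BlockArray a b t) (k : Fin t) : ℕ :=
  {q : Plot a b | s q = k ∧ 1 ≤ q.1.val}.ncard

noncomputable def fc (s : BlockArray a b t) : ℕ → Fin t → ℕ
  | 0 => f0 s
  | 1 => f1 s
  | 2 => f2 s
  | 3 => f3 s
  | 4 => f4 s
  | _ => fun _ => 0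

/-- `h^{uv}_s = Σ_k f^u_{s,k} f^v_{s,k}`. -/
noncomputable def hval (s : BlockArray a b t) (u v : ℕ) : ℝ :=
  ∑ k : Fin t, (fc s u k : ℝ) * (fc s v k : ℝ)

noncomputable def h00 (s : BlockArray a b t) : ℝ := hval s 0 0

noncomputable def h1 (s : BlockArray a b t) : ℝ :=
  hval s 0 1 + hval s 0 2 + hval s 0 3 + hval s 0 4

noncomputable def h2 (s : BlockArray a b t) : ℝ :=
  hval s 1 1 + hval s 2 2 + hval s 3 3 + hval s 4 4

noncomputable def h3 (s : BlockArray a b t) : ℝ :=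
  hval s 1 2 + hval s 1 3 + hval s 1 4 + hval s 2 3 + hval s 2 4 + hval s 3 4

/-- `z¹_{s,r}`: horizontally adjacent pairs of plots receiving the same treatment. -/
noncomputable def zr1 (s : BlockArray a b t) : ℕ :=
  {qr : Plot a b × Plot a b |
    qr.1.1 = qr.2.1 ∧ qr.1.2.val + 1 = qr.2.2.val ∧ s qr.1 = s qr.2}.ncard

noncomputable def zr2 (s : BlockArray a b t) : ℕ :=
  {qr : Plot a b × Plot a b |
    qr.1.1 = qr.2.1 ∧ qr.1.2.val + 2 = qr.2.2.val ∧ s qr.1 = s qr.2}.ncard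

noncomputable def zc1 (s : BlockArray a b t) : ℕ :=
  {qr : Plot a b × Plot a b |
    qr.1.2 = qr.2.2 ∧ qr.1.1.val + 1 = qr.2.1.val ∧ s qr.1 = s qr.2}.ncard

noncomputable def zc2 (s : BlockArray a b t) : ℕ :=
  {qr : Plot a b × Plot a b |
    qr.1.2 = qr.2.2 ∧ qr.1.1.val + 2 = qr.2.1.val ∧ s qr.1 = s qr.2}.ncard

/-- pairs `(i,j)`, `(i−1,j+1)` with the same treatment. -/
noncomputable def zd1 (s : BlockArray a b t) : ℕ :=
  {qr : Plot a b × Plot a b |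
    qr.2.1.val + 1 = qr.1.1.val ∧ qr.1.2.val + 1 = qr.2.2.val ∧ s qr.1 = s qr.2}.ncard

/-- pairs `(i,j)`, `(i+1,j+1)` with the same treatment. -/
noncomputable def zd2 (s : BlockArray a b t) : ℕ :=
  {qr : Plot a b × Plot a b |
    qr.1.1.val + 1 = qr.2.1.val ∧ qr.1.2.val + 1 = qr.2.2.val ∧ s qr.1 = s qr.2}.ncard

noncomputable def z1 (s : BlockArray a b t) : ℝ := 2 * zr1 s + 2 * zc1 s

noncomputable def z2 (s : BlockArray a b t) : ℝ :=
  2 * zr2 s + 2 * zc2 s + 4 * zd1 s + 4 * zd2 s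

/-- `η = 4p − 2a − 2b − 2(8ab − 7a − 7b + 4)/t + 4(2p − a − b)²/(pt)` where `p = ab`. -/
noncomputable def eta (a b t : ℕ) : ℝ :=
  4 * ((a : ℝ) * b) - 2 * a - 2 * b - 2 * (8 * (a : ℝ) * b - 7 * a - 7 * b + 4) / t +
    4 * (2 * (a : ℝ) * b - a - b) ^ 2 / (((a : ℝ) * b) * t)

/-- A corner plot of the `a × b` block. -/
def IsCorner (q : Plot a b) : Prop :=
  (q.1.val = 0 ∨ q.1.val + 1 = a) ∧ (q.2.val = 0 ∨ q.2.val + 1 = b)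

/-- Treatment `k` is significant in `s`: it occupies exactly two plots, which are
neighbors, at least one of them being a corner plot. -/
def Significant (s : BlockArray a b t) (k : Fin t) : Prop :=
  ∃ u v : Plot a b, u ≠ v ∧ {q : Plot a b | s q = k} = {u, v} ∧
    Neighbor u v ∧ (IsCorner u ∨ IsCorner v)

/-- Treatment `k` is strictly significant in `s`: both of its two plots are corners. -/
def StrictSignificant (s : BlockArray a b t) (k : Fin t) : Prop :=
  ∃ u v : Plot a b, u ≠ v ∧ {q : Plot a b | s q = k} = {u, v} ∧
    Neighbor u v ∧ IsCorner u ∧ IsCorner v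

/-- `Q_i`: block arrays with exactly `i` significant treatments in which every other
treatment appears at most once. -/
def Qset (a b t : ℕ) (i : ℕ) : Set (BlockArray a b t) :=
  {s | {k : Fin t | Significant s k}.ncard = i ∧
       ∀ k : Fin t, ¬ Significant s k → f0 s k ≤ 1}

/-- `Q_j*`: members of `Q_j` whose significant treatments are all strictly significant. -/
def QsetStar (a b t : ℕ) (j : ℕ) : Set (BlockArray a b t) :=
  {s | s ∈ Qset a b t j ∧ ∀ k : Fin t, Significant s k → StrictSignificant s k}

/-- Treatment `k` is connected in `s`. -/
def ConnectedIn (s : BlockArray a b t) (k : Fin t) : Prop :=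
  ∀ q r : Plot a b, s q = k → s r = k →
    Relation.ReflTransGen (fun u v => Neighbor u v ∧ s u = k ∧ s v = k) q r

/-!
For a measure `ξ`, the information matrix is a generalized Schur complement of a positive
semidefinite block matrix. Completing the square at `X = x B_t` bounds its trace by
`c₀₀ + 2 c₀₁ x + c₁₁ x²` for every `x`, hence by `q*_ξ ≤ y*`.

Averaging a matrix with zero column sums over all treatment permutations yields
`(trace / (t - 1)) B_t`. By concavity, every criterion is therefore at most its value at
`(y* / (t - 1)) B_t`, and symmetrizing a maximizer of `q*` attains this matrix. Conversely, if `ξ`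
is universally optimal, then testing it against the symmetrized maximizer, with the minimum of a
quadratic form over a permutation orbit as criterion, places its information matrix above
`(y* / (t - 1)) B_t` in the Loewner order; the trace bound forces equality.
-/

section SchurComplement

open scoped ComplexOrder

variable {m n 𝕜 : Type*} [Finite m] [Fintype n] [RCLike 𝕜]
  {A : Matrix m m 𝕜} {C : Matrix m n 𝕜} {D G : Matrix n n 𝕜}

lemma mulVec_eq_zero_of_posSemidef_fromBlocks (h : (fromBlocks A C Cᴴ D).PosSemidef)
    {v : n → 𝕜} (hv : D *ᵥ v = 0) : C *ᵥ v = 0 := by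
  cases nonempty_fintype m
  have hw : fromBlocks A C Cᴴ D *ᵥ Sum.elim 0 v = Sum.elim (C *ᵥ v) 0 := by
    rw [fromBlocks_mulVec, Sum.elim_comp_inl, Sum.elim_comp_inr, hv]
    simp only [mulVec_zero, zero_add]
  have hker : fromBlocks A C Cᴴ D *ᵥ Sum.elim 0 v = 0 := by
    rw [← h.dotProduct_mulVec_zero_iff, hw]
    simp [dotProduct]
  funext i
  exact congrFun (hw.symm.trans hker) (Sum.inl i)

lemma mul_mul_eq_self_of_posSemidef_fromBlocks (h : (fromBlocks A C Cᴴ D).PosSemidef)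
    (hG : D * G * D = D) : C * G * D = C := by
  refine Matrix.ext_iff_mulVec.2 fun v => ?_
  have hDv : D *ᵥ ((G * D) *ᵥ v - v) = 0 := by
    rw [mulVec_sub, mulVec_mulVec, ← Matrix.mul_assoc, hG, sub_self]
  rw [← sub_eq_zero, Matrix.mul_assoc, ← mulVec_mulVec, ← mulVec_sub]
  exact mulVec_eq_zero_of_posSemidef_fromBlocks h hDv

lemma fromBlocks_quadratic_eq_schur_add (h : (fromBlocks A C Cᴴ D).PosSemidef) (hG : D * G * D = D)
    (X : Matrix m n 𝕜) :
    A + X * Cᴴ + C * Xᴴ + X * D * Xᴴ =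
      A - C * G * Cᴴ + (X + C * G) * D * (X + C * G)ᴴ := by
  have hD : Dᴴ = D := (isHermitian_fromBlocks_iff.1 h.isHermitian).2.2.2
  have hC : C * G * D = C := mul_mul_eq_self_of_posSemidef_fromBlocks h hG
  have hC' : D * (C * G)ᴴ = Cᴴ := by
    simpa only [conjTranspose_mul, hD] using congrArg conjTranspose hC
  have hCG : C * (C * G)ᴴ = C * G * Cᴴ := by
    rw [← hC', ← Matrix.mul_assoc, hC]
  rw [Matrix.add_mul X, hC, conjTranspose_add, Matrix.mul_add, Matrix.add_mul, Matrix.add_mul,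
    hCG, Matrix.mul_assoc X D (C * G)ᴴ, hC']
  abel

lemma posSemidef_quadratic_of_fromBlocks (h : (fromBlocks A C Cᴴ D).PosSemidef) (X : Matrix m n 𝕜) :
    (A + X * Cᴴ + C * Xᴴ + X * D * Xᴴ).PosSemidef := by
  classical
  cases nonempty_fintype m
  convert h.mul_mul_conjTranspose_same (fromCols 1 X) using 1
  rw [conjTranspose_fromCols_eq_fromRows_conjTranspose, fromCols_mul_fromBlocks,
    fromCols_mul_fromRows]
  simp only [conjTranspose_one, Matrix.one_mul, Matrix.mul_one, Matrix.add_mul]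
  abel

lemma posSemidef_schur_of_fromBlocks (h : (fromBlocks A C Cᴴ D).PosSemidef) (hG : D * G * D = D) :
    (A - C * G * Cᴴ).PosSemidef := by
  have hX := posSemidef_quadratic_of_fromBlocks h (-(C * G))
  rwa [fromBlocks_quadratic_eq_schur_add h hG, neg_add_cancel, Matrix.zero_mul, Matrix.zero_mul,
    add_zero] at hX

end SchurComplement

section Centering

lemma transpose_Jmat (n : Type*) : (Jmat n)ᵀ = Jmat n := rfl

variable {n : Type*} [Fintype n]

lemma trace_Jmat : (Jmat n).trace = Fintype.card n := by
  simp [Jmat, trace]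

lemma vecMul_Jmat (v : n → ℝ) : v ᵥ* Jmat n = (v ⬝ᵥ 1) • 1 := by
  ext i
  simp [Jmat, vecMul, dotProduct]

lemma Jmat_mul_mul_Jmat (P : Matrix n n ℝ) :
    Jmat n * P * Jmat n = (∑ i, ∑ j, P i j) • Jmat n := by
  ext i j
  simp only [Jmat, Matrix.mul_apply, of_apply, one_mul, mul_one, Matrix.smul_apply, smul_eq_mul]
  exact Finset.sum_comm

lemma Jmat_mul_Jmat : Jmat n * Jmat n = (Fintype.card n : ℝ) • Jmat n := by
  ext i j
  simp [Jmat, Matrix.mul_apply]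

lemma Jmat_mul_eq_zero {m : Type*} {A : Matrix n m ℝ} (hA : 1 ᵥ* A = 0) : Jmat n * A = 0 := by
  ext i j
  simpa [Jmat, Matrix.mul_apply, vecMul, dotProduct] using congrFun hA j

lemma one_dotProduct_mulVec_one (P : Matrix n n ℝ) : 1 ⬝ᵥ P *ᵥ 1 = ∑ i, ∑ j, P i j := by
  simp [dotProduct, mulVec]

lemma posSemidef_sub_mul_Jmat_mul {P : Matrix n n ℝ} (hP : P.PosSemidef) :
    (P - (∑ i, ∑ j, P i j)⁻¹ • (P * Jmat n * P)).PosSemidef := by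
  classical
  have hPt : Pᵀ = P := hP.isHermitian
  set c := ∑ i, ∑ j, P i j
  set K := P * Jmat n * P with hK
  have hKJ : K * (Jmat n * P) = c • K := calc
    K * (Jmat n * P) = P * (Jmat n * P * Jmat n) * P := by simp only [hK, Matrix.mul_assoc]
    _ = c • K := by rw [Jmat_mul_mul_Jmat, Matrix.mul_smul, Matrix.smul_mul]
  have hsq : (1 - c⁻¹ • (Jmat n * P))ᴴ * P * (1 - c⁻¹ • (Jmat n * P)) = P - c⁻¹ • K := calc
    _ = (P - c⁻¹ • K) * (1 - c⁻¹ • (Jmat n * P)) := by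
      rw [conjTranspose_eq_transpose_of_trivial, transpose_sub, transpose_one, transpose_smul,
        transpose_mul, transpose_Jmat, hPt, Matrix.sub_mul, Matrix.one_mul, Matrix.smul_mul]
    _ = P - c⁻¹ • K - c⁻¹ • (K - c⁻¹ • c • K) := by
      rw [Matrix.mul_sub, Matrix.mul_one, Matrix.mul_smul, Matrix.sub_mul, Matrix.smul_mul, hKJ,
        ← Matrix.mul_assoc]
    _ = P - c⁻¹ • K := by
      have hc : c⁻¹ * c⁻¹ * c = c⁻¹ := by simpa only [inv_inv] using mul_self_mul_inv c⁻¹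
      rw [smul_sub, smul_smul, smul_smul, hc, sub_self, sub_zero]
  exact hsq ▸ hP.conjTranspose_mul_mul_same _

lemma one_vecMul_sub_mul_Jmat_mul {P : Matrix n n ℝ} (hP : P.PosSemidef) :
    1 ᵥ* (P - (∑ i, ∑ j, P i j)⁻¹ • (P * Jmat n * P)) = 0 := by
  rw [vecMul_sub, vecMul_smul, ← vecMul_vecMul, ← vecMul_vecMul, vecMul_Jmat, ← dotProduct_mulVec,
    one_dotProduct_mulVec_one, smul_vecMul, smul_smul]
  by_cases hc : ∑ i, ∑ j, P i j = 0
  · have hPt : Pᵀ = P := hP.isHermitian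
    have hP1 : P *ᵥ 1 = 0 := by
      rw [← hP.dotProduct_mulVec_zero_iff, star_one, one_dotProduct_mulVec_one, hc]
    rw [← mulVec_transpose, hPt, hP1, smul_zero, sub_zero]
  · rw [inv_mul_cancel₀ hc, one_smul, sub_self]

variable [DecidableEq n]

lemma transpose_Bmat : (Bmat n)ᵀ = Bmat n := by
  rw [Bmat, transpose_sub, transpose_one, transpose_smul, transpose_Jmat]

lemma isSymm_smul_Bmat (c : ℝ) : (c • Bmat n).IsSymm :=
  IsSymm.smul transpose_Bmat c

lemma Bmat_submatrix_perm (σ : Equiv.Perm n) : (Bmat n).submatrix σ σ = Bmat n := by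
  rw [Bmat, submatrix_sub, submatrix_smul]
  simp only [Pi.sub_apply, Pi.smul_apply, submatrix_one_equiv]
  rfl

lemma Bmat_mul_of_Jmat_mul_eq_zero {A : Matrix n n ℝ} (hA : Jmat n * A = 0) :
    Bmat n * A = A := by
  rw [Bmat, Matrix.sub_mul, Matrix.smul_mul, hA, smul_zero, sub_zero, Matrix.one_mul]

variable [Nonempty n]

lemma Jmat_mul_Bmat : Jmat n * Bmat n = 0 := by
  simp [Bmat, Matrix.mul_sub, Jmat_mul_Jmat, smul_smul]

lemma Bmat_mul_Jmat : Bmat n * Jmat n = 0 := by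
  simp [Bmat, Matrix.sub_mul, Jmat_mul_Jmat, smul_smul]

lemma Bmat_mul_Bmat : Bmat n * Bmat n = Bmat n :=
  Bmat_mul_of_Jmat_mul_eq_zero Jmat_mul_Bmat

lemma trace_Bmat : (Bmat n).trace = Fintype.card n - 1 := by
  simp [Bmat, trace_sub, trace_Jmat]

lemma posSemidef_Bmat : (Bmat n).PosSemidef := by
  simpa [transpose_Bmat, Bmat_mul_Bmat] using posSemidef_conjTranspose_mul_self (Bmat n)

-- With `0⁻¹ = 0` the middle factor is a generalized inverse also when `γ = 0` or `δ = 0`.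
lemma smul_Bmat_add_smul_Jmat_mul_mul_self (γ δ : ℝ) :
    (γ • Bmat n + δ • Jmat n) * (γ⁻¹ • Bmat n + (δ⁻¹ / (Fintype.card n : ℝ) ^ 2) • Jmat n) *
      (γ • Bmat n + δ • Jmat n) = γ • Bmat n + δ • Jmat n := by
  simp only [Matrix.add_mul, Matrix.mul_add, Matrix.smul_mul, Matrix.mul_smul, Bmat_mul_Bmat,
    Bmat_mul_Jmat, Jmat_mul_Bmat, Jmat_mul_Jmat, smul_zero, add_zero, zero_add, smul_smul]
  congr 2
  · rw [← mul_assoc, mul_inv_mul_cancel]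
  · by_cases hδ : δ = 0
    · simp [hδ]
    · field_simp

lemma trace_quadratic_smul_Bmat (A C D : Matrix n n ℝ) (x : ℝ) :
    (A + (x • Bmat n) * Cᵀ + C * (x • Bmat n)ᵀ + (x • Bmat n) * D * (x • Bmat n)ᵀ).trace =
      A.trace + 2 * (Bmat n * C).trace * x + (Bmat n * D).trace * x ^ 2 := by
  have hCt : (Bmat n * Cᵀ).trace = (Bmat n * C).trace := by
    rw [← trace_transpose, transpose_mul, transpose_transpose, transpose_Bmat, trace_mul_comm]
  have hBDB : (Bmat n * D * Bmat n).trace = (Bmat n * D).trace := by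
    rw [trace_mul_comm, ← Matrix.mul_assoc, Bmat_mul_Bmat]
  simp only [transpose_smul, transpose_Bmat, Matrix.smul_mul, Matrix.mul_smul, trace_add,
    trace_smul, smul_eq_mul, hCt, hBDB, trace_mul_comm C]
  ring

end Centering

section PermAverage

variable {n : Type*} [Fintype n] [DecidableEq n]

/-- The average of `A` over all simultaneous permutations of its rows and columns. -/
noncomputable def permAvg (A : Matrix n n ℝ) : Matrix n n ℝ :=
  (Fintype.card (Equiv.Perm n) : ℝ)⁻¹ • ∑ σ : Equiv.Perm n, A.submatrix σ σ

lemma permAvg_submatrix (A : Matrix n n ℝ) (τ : Equiv.Perm n) :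
    (permAvg A).submatrix τ τ = permAvg A := by
  have hsum : (∑ σ : Equiv.Perm n, A.submatrix σ σ).submatrix τ τ =
      ∑ σ : Equiv.Perm n, A.submatrix (σ * τ) (σ * τ) := by
    ext i j
    simp [Matrix.sum_apply]
  calc (permAvg A).submatrix τ τ
      = (Fintype.card (Equiv.Perm n) : ℝ)⁻¹ •
          (∑ σ : Equiv.Perm n, A.submatrix σ σ).submatrix τ τ := rfl
    _ = permAvg A := by
      rw [hsum]
      exact congrArg _ (Equiv.sum_comp (Equiv.mulRight τ) fun σ => A.submatrix σ σ)

lemma trace_mul_permAvg {K : Matrix n n ℝ} (hK : ∀ σ : Equiv.Perm n, K.submatrix σ σ = K)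
    (A : Matrix n n ℝ) : (K * permAvg A).trace = (K * A).trace := by
  have hσ (σ : Equiv.Perm n) : (K * A.submatrix σ σ).trace = (K * A).trace := by
    conv_lhs => rw [← hK σ, submatrix_mul_equiv]
    exact Equiv.sum_comp σ fun i => (K * A) i i
  simp [permAvg, Matrix.mul_sum, trace_sum, hσ, Fintype.card_ne_zero]

-- The permutation action on `n` is 2-transitive: one diagonal and one off-diagonal entry
-- determine `A`.
lemma exists_eq_smul_Bmat_add_smul_Jmat [Nontrivial n] {A : Matrix n n ℝ}
    (hA : ∀ σ : Equiv.Perm n, A.submatrix σ σ = A) :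
    ∃ γ δ : ℝ, A = γ • Bmat n + δ • Jmat n := by
  obtain ⟨i, j, hij⟩ := exists_pair_ne n
  have hAσ (σ : Equiv.Perm n) (k l : n) : A (σ k) (σ l) = A k l := congrFun₂ (hA σ) k l
  refine ⟨A i i - A i j, A i j + (Fintype.card n : ℝ)⁻¹ * (A i i - A i j),
    Matrix.ext fun k l => ?_⟩
  obtain rfl | hkl := eq_or_ne k l
  · have hdiag : A k k = A i i := by
      simpa only [Equiv.swap_apply_left] using hAσ (Equiv.swap i k) i i
    simp only [hdiag, Bmat, Jmat, smul_of, Matrix.add_apply, Matrix.smul_apply, Matrix.sub_apply,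
      one_apply_eq, of_apply, Pi.smul_apply, smul_eq_mul, mul_one]
    ring
  · have hoff : A k l = A i j := by
      obtain ⟨σ, hi, hj⟩ := MulAction.is_two_pretransitive_iff.1
        (Equiv.Perm.isMultiplyPretransitive n 2) hij hkl
      rw [← hi, ← hj]
      exact hAσ σ i j
    simp only [hoff, Bmat, Jmat, smul_of, Matrix.add_apply, Matrix.smul_apply, Matrix.sub_apply,
      ne_eq, hkl, not_false_eq_true, one_apply_ne, of_apply, Pi.smul_apply, smul_eq_mul, mul_one,
      zero_sub, mul_neg]
    ring

lemma eq_smul_Bmat_add_smul_Jmat [Nontrivial n] {A : Matrix n n ℝ}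
    (hA : ∀ σ : Equiv.Perm n, A.submatrix σ σ = A) :
    A = ((Bmat n * A).trace / (Fintype.card n - 1)) • Bmat n +
      ((Jmat n * A).trace / (Fintype.card n : ℝ) ^ 2) • Jmat n := by
  obtain ⟨γ, δ, rfl⟩ := exists_eq_smul_Bmat_add_smul_Jmat hA
  have hn : (Fintype.card n : ℝ) ^ 2 ≠ 0 :=
    pow_ne_zero 2 (Nat.cast_ne_zero.2 Fintype.card_ne_zero)
  have hn1 : (Fintype.card n : ℝ) - 1 ≠ 0 :=
    sub_ne_zero.2 (Nat.cast_ne_one.2 Fintype.one_lt_card.ne')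
  have hγ : (Bmat n * (γ • Bmat n + δ • Jmat n)).trace = γ * (Fintype.card n - 1) := by
    rw [Matrix.mul_add, Matrix.mul_smul, Matrix.mul_smul, Bmat_mul_Bmat, Bmat_mul_Jmat, smul_zero,
      add_zero, trace_smul, trace_Bmat, smul_eq_mul]
  have hδ : (Jmat n * (γ • Bmat n + δ • Jmat n)).trace = δ * (Fintype.card n : ℝ) ^ 2 := by
    rw [Matrix.mul_add, Matrix.mul_smul, Matrix.mul_smul, Jmat_mul_Bmat, Jmat_mul_Jmat, smul_zero,
      zero_add, trace_smul, trace_smul, trace_Jmat, smul_eq_mul, smul_eq_mul, pow_two]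
  rw [hγ, hδ, mul_div_cancel_right₀ _ hn1, mul_div_cancel_right₀ _ hn]

lemma permAvg_eq [Nontrivial n] (A : Matrix n n ℝ) :
    permAvg A = ((Bmat n * A).trace / (Fintype.card n - 1)) • Bmat n +
      ((Jmat n * A).trace / (Fintype.card n : ℝ) ^ 2) • Jmat n := by
  rw [eq_smul_Bmat_add_smul_Jmat (permAvg_submatrix A), trace_mul_permAvg Bmat_submatrix_perm,
    trace_mul_permAvg fun _ => rfl]

lemma permAvg_eq_smul_Bmat [Nontrivial n] {A : Matrix n n ℝ} (hA : Jmat n * A = 0) :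
    permAvg A = ((Bmat n * A).trace / (Fintype.card n - 1)) • Bmat n := by
  rw [permAvg_eq, hA, trace_zero, zero_div, zero_smul, add_zero]

end PermAverage

section Criteria

variable {t : ℕ}

lemma GoodPhi.concaveOn {Φ : Matrix (Fin t) (Fin t) ℝ → ℝ} (hΦ : GoodPhi t Φ) :
    ConcaveOn ℝ {A | A.IsSymm} Φ := by
  refine ⟨fun A hA B hB c d _ _ _ => (IsSymm.smul hA c).add (IsSymm.smul hB d),
    fun A hA B hB c d hc hd hcd => ?_⟩
  obtain rfl := eq_sub_of_add_eq' hcd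
  exact hΦ.1 A B hA hB c hc (sub_nonneg.1 hd)

lemma GoodPhi.le_permAvg {Φ : Matrix (Fin t) (Fin t) ℝ → ℝ} (hΦ : GoodPhi t Φ)
    {A : Matrix (Fin t) (Fin t) ℝ} (hA : A.IsSymm) : Φ A ≤ Φ (permAvg A) := by
  have hw : ∑ _σ : Equiv.Perm (Fin t), (Fintype.card (Equiv.Perm (Fin t)) : ℝ)⁻¹ = 1 := by
    rw [Finset.sum_const, Finset.card_univ, nsmul_eq_mul,
      mul_inv_cancel₀ (Nat.cast_ne_zero.2 Fintype.card_ne_zero)]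
  have hjensen := hΦ.concaveOn.le_map_sum (fun _ _ => by positivity) hw
    fun (σ : Equiv.Perm (Fin t)) _ => hA.submatrix σ
  simp only [hΦ.2.2] at hjensen
  rwa [← Finset.sum_smul, hw, one_smul, ← Finset.smul_sum] at hjensen

/-- The minimum of the quadratic form `v' C v` over all simultaneous permutations of the rows and
columns of `C`. This criterion is good, and it separates permutation invariant matrices from
those not above them in the Loewner order. -/
noncomputable def permMinQuad (v : Fin t → ℝ) (C : Matrix (Fin t) (Fin t) ℝ) : ℝ :=
  ⨅ σ : Equiv.Perm (Fin t), v ⬝ᵥ C.submatrix σ σ *ᵥ v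

lemma permMinQuad_le (v : Fin t → ℝ) (C : Matrix (Fin t) (Fin t) ℝ) (σ : Equiv.Perm (Fin t)) :
    permMinQuad v C ≤ v ⬝ᵥ C.submatrix σ σ *ᵥ v :=
  ciInf_le (Set.finite_range _).bddBelow σ

lemma permMinQuad_eq {C : Matrix (Fin t) (Fin t) ℝ}
    (hC : ∀ σ : Equiv.Perm (Fin t), C.submatrix σ σ = C) (v : Fin t → ℝ) :
    permMinQuad v C = v ⬝ᵥ C *ᵥ v := by
  simp only [permMinQuad, hC, ciInf_const]

lemma goodPhi_permMinQuad (v : Fin t → ℝ) : GoodPhi t (permMinQuad v) := by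
  refine ⟨fun A B _ _ α hα hα1 => le_ciInf fun σ => ?_, fun A B _ _ hAB => le_ciInf fun σ => ?_,
    fun σ C => ?_⟩
  · calc α * permMinQuad v A + (1 - α) * permMinQuad v B
        ≤ α * (v ⬝ᵥ A.submatrix σ σ *ᵥ v) + (1 - α) * (v ⬝ᵥ B.submatrix σ σ *ᵥ v) := by
          have := sub_nonneg.2 hα1
          gcongr <;> exact permMinQuad_le v _ σ
      _ = v ⬝ᵥ (α • A.submatrix σ σ + (1 - α) • B.submatrix σ σ) *ᵥ v := by
          simp only [add_mulVec, smul_mulVec, dotProduct_add, dotProduct_smul, smul_eq_mul]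
  · have hnonneg := (hAB.submatrix σ).dotProduct_mulVec_nonneg v
    rw [submatrix_sub, Pi.sub_apply, Pi.sub_apply, sub_mulVec, dotProduct_sub, star_trivial,
      sub_nonneg] at hnonneg
    exact (permMinQuad_le v A σ).trans hnonneg
  · refine (Equiv.mulLeft σ).iInf_congr fun τ => ?_
    rw [submatrix_submatrix, Equiv.coe_mulLeft, Equiv.Perm.coe_mul]

lemma posSemidef_sub_of_forall_goodPhi_le {A C : Matrix (Fin t) (Fin t) ℝ} (hA : A.IsSymm)
    (hC : C.IsSymm) (hCσ : ∀ σ : Equiv.Perm (Fin t), C.submatrix σ σ = C)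
    (h : ∀ Φ, GoodPhi t Φ → Φ C ≤ Φ A) : (A - C).PosSemidef := by
  have hAC : (A - C).IsHermitian := by
    rw [IsHermitian, conjTranspose_eq_transpose_of_trivial, hA.sub hC]
  refine .of_dotProduct_mulVec_nonneg hAC fun v => ?_
  rw [sub_mulVec, dotProduct_sub, sub_nonneg, star_trivial]
  calc v ⬝ᵥ C *ᵥ v = permMinQuad v C := (permMinQuad_eq hCσ v).symm
    _ ≤ permMinQuad v A := h _ (goodPhi_permMinQuad v)
    _ ≤ v ⬝ᵥ A *ᵥ v := permMinQuad_le v A 1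

end Criteria

section Symmetrization

variable {a b t : ℕ} {W : Matrix (Plot a b) (Plot a b) ℝ}

lemma Tmat_comp_submatrix (σ : Equiv.Perm (Fin t)) (s : BlockArray a b t) :
    (Tmat (σ ∘ s)).submatrix id σ = Tmat s := by
  ext q k
  simp [Tmat]

lemma Fmat_comp_submatrix (σ : Equiv.Perm (Fin t)) (s : BlockArray a b t) :
    (Fmat (σ ∘ s)).submatrix id σ = Fmat s :=
  congrArg (Mmat a b * ·) (Tmat_comp_submatrix σ s)

lemma Cs00_comp_submatrix (σ : Equiv.Perm (Fin t)) (s : BlockArray a b t) :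
    (Cs00 W (σ ∘ s)).submatrix σ σ = Cs00 W s := by
  rw [Cs00, Cs00, ← Tmat_comp_submatrix σ s]
  rfl

lemma Cs01_comp_submatrix (σ : Equiv.Perm (Fin t)) (s : BlockArray a b t) :
    (Cs01 W (σ ∘ s)).submatrix σ σ = Cs01 W s := by
  rw [Cs01, Cs01, ← Tmat_comp_submatrix σ s, ← Fmat_comp_submatrix σ s]
  rfl

lemma Cs11_comp_submatrix (σ : Equiv.Perm (Fin t)) (s : BlockArray a b t) :
    (Cs11 W (σ ∘ s)).submatrix σ σ = Cs11 W s := by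
  rw [Cs11, Cs11, ← Fmat_comp_submatrix σ s]
  rfl

/-- The symmetrization of a measure: its average over all relabelings of the treatments. -/
noncomputable def symmetrize (η : BlockArray a b t → ℝ) (s : BlockArray a b t) : ℝ :=
  (Fintype.card (Equiv.Perm (Fin t)) : ℝ)⁻¹ * ∑ σ : Equiv.Perm (Fin t), η (σ ∘ s)

lemma sum_comp_perm {M : Type*} [AddCommMonoid M] (σ : Equiv.Perm (Fin t))
    (f : BlockArray a b t → M) : ∑ s : BlockArray a b t, f (σ ∘ s) = ∑ s, f s :=
  Equiv.sum_comp (Equiv.arrowCongr (.refl _) σ) f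

lemma sum_symmetrize_smul {E : Type*} [AddCommGroup E] [Module ℝ E] (η : BlockArray a b t → ℝ)
    (f : BlockArray a b t → E) :
    ∑ s, symmetrize η s • f s = (Fintype.card (Equiv.Perm (Fin t)) : ℝ)⁻¹ •
      ∑ σ : Equiv.Perm (Fin t), ∑ s, η (σ ∘ s) • f s := by
  simp only [symmetrize, mul_smul, Finset.sum_smul, ← Finset.smul_sum]
  rw [Finset.sum_comm]

lemma isMeasure_symmetrize {η : BlockArray a b t → ℝ} (hη : IsMeasure η) :
    IsMeasure (symmetrize η) := by
  refine ⟨fun s => mul_nonneg (by positivity) (Finset.sum_nonneg fun σ _ => hη.1 _), ?_⟩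
  have hsum := sum_symmetrize_smul η fun _ => (1 : ℝ)
  simpa [sum_comp_perm _ η, hη.2, Fintype.card_ne_zero] using hsum

lemma sum_symmetrize_smul_eq_permAvg {C : BlockArray a b t → Matrix (Fin t) (Fin t) ℝ}
    (hC : ∀ (σ : Equiv.Perm (Fin t)) s, (C (σ ∘ s)).submatrix σ σ = C s)
    (η : BlockArray a b t → ℝ) :
    ∑ s, symmetrize η s • C s = permAvg (∑ s, η s • C s) := by
  have hσ (σ : Equiv.Perm (Fin t)) :
      ∑ s, η (σ ∘ s) • C s = (∑ s, η s • C s).submatrix σ σ := calc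
    _ = ∑ s, η (σ ∘ s) • (C (σ ∘ s)).submatrix σ σ := by simp only [hC]
    _ = ∑ s, η s • (C s).submatrix σ σ := sum_comp_perm σ fun s => η s • (C s).submatrix σ σ
    _ = (∑ s, η s • C s).submatrix σ σ := by
      ext i j
      simp only [Matrix.sum_apply, Matrix.smul_apply, submatrix_apply]
  simp only [sum_symmetrize_smul, hσ, permAvg]

lemma Cm00_symmetrize (η : BlockArray a b t → ℝ) : Cm00 W (symmetrize η) = permAvg (Cm00 W η) :=
  sum_symmetrize_smul_eq_permAvg Cs00_comp_submatrix η

lemma Cm01_symmetrize (η : BlockArray a b t → ℝ) : Cm01 W (symmetrize η) = permAvg (Cm01 W η) :=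
  sum_symmetrize_smul_eq_permAvg Cs01_comp_submatrix η

lemma Cm11_symmetrize (η : BlockArray a b t → ℝ) : Cm11 W (symmetrize η) = permAvg (Cm11 W η) :=
  sum_symmetrize_smul_eq_permAvg Cs11_comp_submatrix η

end Symmetrization

section InformationMatrix

variable {a b t : ℕ} {W : Matrix (Plot a b) (Plot a b) ℝ} {ξ η : BlockArray a b t → ℝ}
  {G : Matrix (Fin t) (Fin t) ℝ}

lemma posSemidef_fromBlocks_Cs (hW : W.PosSemidef) (s : BlockArray a b t) :
    (fromBlocks (Cs00 W s) (Cs01 W s) (Cs01 W s)ᵀ (Cs11 W s)).PosSemidef := by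
  have hWt : Wᵀ = W := hW.isHermitian
  convert hW.conjTranspose_mul_mul_same (fromCols (Tmat s) (Fmat s)) using 1
  rw [conjTranspose_eq_transpose_of_trivial, transpose_fromCols, fromRows_mul,
    fromRows_mul_fromCols, Cs00, Cs01, Cs11, transpose_mul, transpose_mul, transpose_transpose,
    hWt, Matrix.mul_assoc _ W (Tmat s), Matrix.mul_assoc (Fmat s)ᵀ W (Tmat s)]

lemma posSemidef_fromBlocks_Cm (hW : W.PosSemidef) (hξ : IsMeasure ξ) :
    (fromBlocks (Cm00 W ξ) (Cm01 W ξ) (Cm01 W ξ)ᴴ (Cm11 W ξ)).PosSemidef := by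
  have hsum : fromBlocks (Cm00 W ξ) (Cm01 W ξ) (Cm01 W ξ)ᴴ (Cm11 W ξ) =
      ∑ s, ξ s • fromBlocks (Cs00 W s) (Cs01 W s) (Cs01 W s)ᵀ (Cs11 W s) := by
    ext (i | i) (j | j) <;> simp [Cm00, Cm01, Cm11, Matrix.sum_apply]
  rw [hsum]
  exact posSemidef_sum _ fun s _ => (posSemidef_fromBlocks_Cs hW s).smul (hξ.1 s)

lemma posSemidef_infoMat (hW : W.PosSemidef) (hξ : IsMeasure ξ) (hG : IsGenInv (Cm11 W ξ) G) :
    (InfoMat W ξ G).PosSemidef :=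
  posSemidef_schur_of_fromBlocks (posSemidef_fromBlocks_Cm hW hξ) hG

lemma isSymm_infoMat (hW : W.PosSemidef) (hξ : IsMeasure ξ) (hG : IsGenInv (Cm11 W ξ) G) :
    (InfoMat W ξ G).IsSymm :=
  (posSemidef_infoMat hW hξ hG).isHermitian

lemma Jmat_mul_transpose_Tmat_mul_mul (hW : 1 ᵥ* W = 0) (s : BlockArray a b t)
    {m : Type*} (V : Matrix (Plot a b) m ℝ) : Jmat (Fin t) * ((Tmat s)ᵀ * W * V) = 0 := by
  have hT : 1 ᵥ* (Tmat s)ᵀ = 1 := by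
    ext q
    simp [Tmat, vecMul, dotProduct]
  exact Jmat_mul_eq_zero (by rw [← vecMul_vecMul, ← vecMul_vecMul, hT, hW, zero_vecMul])

lemma Jmat_mul_Cm00 (hW : 1 ᵥ* W = 0) (ξ : BlockArray a b t → ℝ) :
    Jmat (Fin t) * Cm00 W ξ = 0 := by
  simp only [Cm00, Cs00, Matrix.mul_sum, Matrix.mul_smul, Jmat_mul_transpose_Tmat_mul_mul hW,
    smul_zero, Finset.sum_const_zero]

lemma Jmat_mul_Cm01 (hW : 1 ᵥ* W = 0) (ξ : BlockArray a b t → ℝ) :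
    Jmat (Fin t) * Cm01 W ξ = 0 := by
  simp only [Cm01, Cs01, Matrix.mul_sum, Matrix.mul_smul, Jmat_mul_transpose_Tmat_mul_mul hW,
    smul_zero, Finset.sum_const_zero]

lemma Jmat_mul_infoMat (hW : 1 ᵥ* W = 0) (ξ : BlockArray a b t → ℝ)
    (G : Matrix (Fin t) (Fin t) ℝ) : Jmat (Fin t) * InfoMat W ξ G = 0 := by
  rw [InfoMat, Matrix.mul_sub, Jmat_mul_Cm00 hW, ← Matrix.mul_assoc, ← Matrix.mul_assoc,
    Jmat_mul_Cm01 hW, Matrix.zero_mul, Matrix.zero_mul, sub_zero]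

lemma trace_Bmat_mul_Cm00 (W : Matrix (Plot a b) (Plot a b) ℝ) (ξ : BlockArray a b t → ℝ) :
    (Bmat (Fin t) * Cm00 W ξ).trace = cm00 W ξ := by
  simp only [cm00, Cm00, cs00, Matrix.mul_sum, Matrix.mul_smul, trace_sum, trace_smul, smul_eq_mul]

lemma trace_Bmat_mul_Cm01 (W : Matrix (Plot a b) (Plot a b) ℝ) (ξ : BlockArray a b t → ℝ) :
    (Bmat (Fin t) * Cm01 W ξ).trace = cm01 W ξ := by
  simp only [cm01, Cm01, cs01, Matrix.mul_sum, Matrix.mul_smul, trace_sum, trace_smul, smul_eq_mul]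

lemma trace_Bmat_mul_Cm11 (W : Matrix (Plot a b) (Plot a b) ℝ) (ξ : BlockArray a b t → ℝ) :
    (Bmat (Fin t) * Cm11 W ξ).trace = cm11 W ξ := by
  simp only [cm11, Cm11, cs11, Matrix.mul_sum, Matrix.mul_smul, trace_sum, trace_smul, smul_eq_mul]

lemma trace_infoMat_le [Nonempty (Fin t)] (hW : W.PosSemidef) (hW1 : 1 ᵥ* W = 0)
    (hξ : IsMeasure ξ) (hG : IsGenInv (Cm11 W ξ) G) (x : ℝ) :
    (InfoMat W ξ G).trace ≤ cm00 W ξ + 2 * cm01 W ξ * x + cm11 W ξ * x ^ 2 := by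
  have hblocks := posSemidef_fromBlocks_Cm hW hξ
  have hD : (Cm11 W ξ).PosSemidef := hblocks.submatrix Sum.inr
  have hsquare := (hD.mul_mul_conjTranspose_same (x • Bmat (Fin t) + Cm01 W ξ * G)).trace_nonneg
  have hquad := congrArg trace (fromBlocks_quadratic_eq_schur_add hblocks hG (x • Bmat (Fin t)))
  have hCm00 : (Cm00 W ξ).trace = cm00 W ξ := by
    rw [← trace_Bmat_mul_Cm00, Bmat_mul_of_Jmat_mul_eq_zero (Jmat_mul_Cm00 hW1 ξ)]
  simp only [conjTranspose_eq_transpose_of_trivial] at hquad hsquare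
  rw [trace_quadratic_smul_Bmat, hCm00, trace_Bmat_mul_Cm01, trace_Bmat_mul_Cm11, trace_add]
    at hquad
  exact hquad ▸ le_add_of_nonneg_right hsquare

lemma trace_infoMat_le_qstar [Nonempty (Fin t)] (hW : W.PosSemidef) (hW1 : 1 ᵥ* W = 0)
    (hξ : IsMeasure ξ) (hG : IsGenInv (Cm11 W ξ) G) : (InfoMat W ξ G).trace ≤ qstar W ξ := by
  refine (trace_infoMat_le hW hW1 hξ hG (-(cm01 W ξ / cm11 W ξ))).trans_eq ?_
  rw [qstar]
  -- If `c₁₁ = 0`, both the vertex `-c₀₁ / c₁₁` and the quotient in `q*` are `0`.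
  by_cases hc : cm11 W ξ = 0
  · simp [hc]
  · field_simp
    ring

lemma cast_sub_one_pos (t : ℕ) [Nontrivial (Fin t)] : (0 : ℝ) < t - 1 :=
  sub_pos.2 (Nat.one_lt_cast.2 (Fin.nontrivial_iff_two_le.1 ‹_›))

lemma exists_infoMat_symmetrize_eq [Nontrivial (Fin t)] (hW1 : 1 ᵥ* W = 0)
    (η : BlockArray a b t → ℝ) :
    ∃ H, IsGenInv (Cm11 W (symmetrize η)) H ∧
      InfoMat W (symmetrize η) H = (qstar W η / ((t : ℝ) - 1)) • Bmat (Fin t) := by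
  have ht : (t : ℝ) - 1 ≠ 0 := (cast_sub_one_pos t).ne'
  have h00 : Cm00 W (symmetrize η) = (cm00 W η / (t - 1)) • Bmat (Fin t) := by
    rw [Cm00_symmetrize, permAvg_eq_smul_Bmat (Jmat_mul_Cm00 hW1 η), trace_Bmat_mul_Cm00,
      Fintype.card_fin]
  have h01 : Cm01 W (symmetrize η) = (cm01 W η / (t - 1)) • Bmat (Fin t) := by
    rw [Cm01_symmetrize, permAvg_eq_smul_Bmat (Jmat_mul_Cm01 hW1 η), trace_Bmat_mul_Cm01,
      Fintype.card_fin]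
  rw [Cm11_symmetrize, permAvg_eq, trace_Bmat_mul_Cm11, Fintype.card_fin]
  refine ⟨_, smul_Bmat_add_smul_Jmat_mul_mul_self _ _, ?_⟩
  simp only [InfoMat, h00, h01, Matrix.mul_add, Matrix.smul_mul, Matrix.mul_smul, transpose_smul,
    transpose_Bmat, Bmat_mul_Bmat, Bmat_mul_Jmat, smul_zero, add_zero, smul_smul, ← sub_smul]
  congr 1
  rw [qstar]
  by_cases hc : cm11 W η = 0
  · simp [hc]
  · field_simp

end InformationMatrix

section UniversalOptimality

variable {a b t : ℕ} [Nontrivial (Fin t)] {W : Matrix (Plot a b) (Plot a b) ℝ}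
  {ξ η : BlockArray a b t → ℝ} {G H : Matrix (Fin t) (Fin t) ℝ}

lemma GoodPhi.infoMat_le {Φ : Matrix (Fin t) (Fin t) ℝ → ℝ} (hΦ : GoodPhi t Φ)
    (hW : W.PosSemidef) (hW1 : 1 ᵥ* W = 0) (hη : IsMeasure η) (hH : IsGenInv (Cm11 W η) H)
    {y : ℝ} (hy : qstar W η ≤ y) :
    Φ (InfoMat W η H) ≤ Φ ((y / ((t : ℝ) - 1)) • Bmat (Fin t)) := by
  have hJ := Jmat_mul_infoMat hW1 η H
  have htrace := trace_infoMat_le_qstar hW hW1 hη hH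
  calc Φ (InfoMat W η H) ≤ Φ (permAvg (InfoMat W η H)) := hΦ.le_permAvg (isSymm_infoMat hW hη hH)
    _ = Φ (((InfoMat W η H).trace / ((t : ℝ) - 1)) • Bmat (Fin t)) := by
      rw [permAvg_eq_smul_Bmat hJ, Bmat_mul_of_Jmat_mul_eq_zero hJ, Fintype.card_fin]
    _ ≤ Φ ((y / ((t : ℝ) - 1)) • Bmat (Fin t)) := by
      refine hΦ.2.1 _ _ (isSymm_smul_Bmat _) (isSymm_smul_Bmat _) ?_
      rw [← sub_smul, ← sub_div]
      exact posSemidef_Bmat.smul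
        (div_nonneg (sub_nonneg.2 (htrace.trans hy)) (cast_sub_one_pos t).le)

lemma UnivOptimal.posSemidef_infoMat_sub (hopt : UnivOptimal W ξ) (hW : W.PosSemidef)
    (hW1 : 1 ᵥ* W = 0) (hξ : IsMeasure ξ) (hG : IsGenInv (Cm11 W ξ) G) (hη : IsMeasure η) :
    (InfoMat W ξ G - (qstar W η / ((t : ℝ) - 1)) • Bmat (Fin t)).PosSemidef := by
  obtain ⟨H, hH, hinfo⟩ := exists_infoMat_symmetrize_eq hW1 η
  rw [← hinfo]
  refine posSemidef_sub_of_forall_goodPhi_le (isSymm_infoMat hW hξ hG)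
    (isSymm_infoMat hW (isMeasure_symmetrize hη) hH) (fun σ => ?_)
    (hopt _ (isMeasure_symmetrize hη) G H hG hH)
  rw [hinfo]
  exact congrArg ((qstar W η / ((t : ℝ) - 1)) • ·) (Bmat_submatrix_perm σ)

end UniversalOptimality

theorem univOptimal_iff_infoMat_eq_general {a b t : ℕ} (ht : 2 ≤ t)
    {W : Matrix (Plot a b) (Plot a b) ℝ} (hW : W.PosSemidef) (hW1 : 1 ᵥ* W = 0) {ystar : ℝ}
    (hy : IsGreatest {y : ℝ | ∃ η : BlockArray a b t → ℝ, IsMeasure η ∧ qstar W η = y} ystar)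
    {ξ : BlockArray a b t → ℝ} (hξ : IsMeasure ξ) :
    UnivOptimal W ξ ↔
      ∀ G : Matrix (Fin t) (Fin t) ℝ, IsGenInv (Cm11 W ξ) G →
        InfoMat W ξ G = (ystar / ((t : ℝ) - 1)) • Bmat (Fin t) := by
  have : Nontrivial (Fin t) := Fin.nontrivial_iff_two_le.2 ht
  refine ⟨fun hopt G hG => ?_, fun hinfo η hη G H hG hH Φ hΦ => ?_⟩
  · obtain ⟨⟨η, hη, rfl⟩, hmax⟩ := hy
    have hpsd := hopt.posSemidef_infoMat_sub hW hW1 hξ hG hη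
    have hle := (trace_infoMat_le_qstar hW hW1 hξ hG).trans (hmax ⟨ξ, hξ, rfl⟩)
    rw [← sub_eq_zero, ← hpsd.trace_eq_zero_iff]
    refine hpsd.trace_nonneg.antisymm' ?_
    rwa [trace_sub, trace_smul, trace_Bmat, Fintype.card_fin, smul_eq_mul,
      div_mul_cancel₀ _ (cast_sub_one_pos t).ne', sub_nonpos]
  · rw [hinfo G hG]
    exact hΦ.infoMat_le hW hW1 hη hH (hy.2 ⟨η, hη, rfl⟩)

/-- with `y*` the maximum of `q*` over all measures, a measure `ξ` is
universally optimal iff for every generalized inverse `G` of `C_{ξ11}` one has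
`C_{ξ00} − C_{ξ01} G C_{ξ10} = y*·B_t/(t−1)`. -/
theorem univOptimal_iff_infoMat_eq
    (a b t : ℕ) (ha : 2 ≤ a) (hab : a ≤ b) (hb : 3 ≤ b) (ht : 2 ≤ t)
    (Sig : Matrix (Plot a b) (Plot a b) ℝ) (hSig : Sig.PosDef)
    (ystar : ℝ)
    (hy : IsGreatest {y : ℝ | ∃ η : BlockArray a b t → ℝ,
            IsMeasure η ∧ qstar (Btilde Sig) η = y} ystar)
    (ξ : BlockArray a b t → ℝ) (hξ : IsMeasure ξ) :
    UnivOptimal (Btilde Sig) ξ ↔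
      ∀ G : Matrix (Fin t) (Fin t) ℝ, IsGenInv (Cm11 (Btilde Sig) ξ) G →
        InfoMat (Btilde Sig) ξ G = (ystar / ((t : ℝ) - 1)) • Bmat (Fin t) := by
  exact univOptimal_iff_infoMat_eq_general ht
    (posSemidef_sub_mul_Jmat_mul hSig.inv.posSemidef)
    (one_vecMul_sub_mul_Jmat_mul hSig.inv.posSemidef) hy hξ

end TwoDim
end

section
/- The function r(x) = max_{s∈S} q_s(x) is strictly convex on ℝ and attains its minimum at a unique point x*; moreover the minimum value r(x*) equals the maximum of q*_ξ over all measures ξ. -/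
open Matrix

namespace TwoDim

variable {a b t : ℕ}

/-!
The function `r` is the maximum of finitely many quadratics `q_s`, so everything about it except
the minimax identity follows once each leading coefficient `c_{s11}` is positive. For the identity,
Sion's minimax theorem yields a measure `ξ` whose mixture `Σ_s ξ_s q_s` is at least `r(x*)`
everywhere; the minimum of that mixture is `q*_ξ`.

Since `B_t` is a symmetric idempotent, `c_{s11}` is the sum of the values of the quadratic form `B̃`
at the columns of `F_s B_t`, and this form vanishes only on constant vectors. The row of `F_s`
belonging to a plot consists of integers summing to its number of neighbors. If a column of
`F_s B_t` were constant, these numbers would therefore be congruent modulo `t`, but the corner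
`(1,1)` has one neighbor fewer than the plot `(1,2)`.
-/

section Minimax

variable {ι : Type*}

theorem strictConvexOn_iSup [Finite ι] [Nonempty ι] {E : Type*} [AddCommMonoid E] [SMul ℝ E]
    {s : Set E} {f : ι → E → ℝ} (hs : Convex ℝ s) (hf : ∀ i, StrictConvexOn ℝ s (f i)) :
    StrictConvexOn ℝ s fun x => ⨆ i, f i x := by
  refine ⟨hs, fun x hx y hy hxy α β hα hβ hαβ => ?_⟩
  obtain ⟨i, hi⟩ := exists_eq_ciSup_of_finite (f := fun i => f i (α • x + β • y))
  calc ⨆ i, f i (α • x + β • y) = f i (α • x + β • y) := hi.symm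
    _ < α • f i x + β • f i y := (hf i).2 hx hy hxy hα hβ hαβ
    _ ≤ α • (⨆ i, f i x) + β • ⨆ i, f i y := by
      gcongr
      · exact Finite.le_ciSup (fun i => f i x) i
      · exact Finite.le_ciSup (fun i => f i y) i

theorem convexOn_sum_mul {E : Type*} [AddCommMonoid E] [Module ℝ E] {s : Set E}
    {f : ι → E → ℝ} (hs : Convex ℝ s) (hf : ∀ i, ConvexOn ℝ s (f i)) {w : ι → ℝ}
    (hw : ∀ i, 0 ≤ w i) (t : Finset ι) : ConvexOn ℝ s fun x => ∑ i ∈ t, w i * f i x := by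
  classical
  induction t using Finset.induction_on with
  | empty => simpa using convexOn_const (0 : ℝ) hs
  | insert i t hi ih =>
    simp only [Finset.sum_insert hi]
    exact ((hf i).smul (hw i)).add ih

variable [Fintype ι]

theorem sum_mul_le_iSup {w : ι → ℝ} (hw : w ∈ stdSimplex ℝ ι) (f : ι → ℝ) :
    ∑ i, w i * f i ≤ ⨆ i, f i :=
  calc ∑ i, w i * f i ≤ ∑ i, w i * ⨆ j, f j :=
        Finset.sum_le_sum fun i _ => mul_le_mul_of_nonneg_left (Finite.le_ciSup f i) (hw.1 i)
    _ = ⨆ j, f j := by rw [← Finset.sum_mul, hw.2, one_mul]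

/-- Sion's theorem applies on a compact ball around the minimizer; there the mixture stays above
the minimum, which it attains at the centre, so convexity makes this local minimum global. -/
theorem exists_mem_stdSimplex_forall_iSup_le_sum [Nonempty ι] {E : Type*} [NormedAddCommGroup E]
    [NormedSpace ℝ E] [FiniteDimensional ℝ E] {f : ι → E → ℝ}
    (hf : ∀ i, ConvexOn ℝ Set.univ (f i)) {a : E} (ha : ∀ x, ⨆ i, f i a ≤ ⨆ i, f i x) :
    ∃ w ∈ stdSimplex ℝ ι, ∀ x, ⨆ i, f i a ≤ ∑ i, w i * f i x := by
  classical
  have hmix : ∀ w ∈ stdSimplex ℝ ι, ConvexOn ℝ Set.univ fun x => ∑ i, w i * f i x :=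
    fun w hw => convexOn_sum_mul convex_univ hf hw.1 _
  have hlinear : ∀ x, ConcaveOn ℝ (stdSimplex ℝ ι) fun w => ∑ i, w i * f i x := fun x =>
    (Fintype.linearCombination ℝ fun i => f i x).concaveOn (convex_stdSimplex ℝ ι)
  have : ProperSpace E := FiniteDimensional.proper ℝ E
  obtain ⟨a', -, w, hw, hsaddle⟩ := Sion.exists_isSaddlePointOn
    (X := Metric.closedBall a 1) (Y := stdSimplex ℝ ι) (f := fun x w => ∑ i, w i * f i x)
    ⟨a, Metric.mem_closedBall_self zero_le_one⟩ (convex_closedBall a 1)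
    (isCompact_closedBall a 1)
    (fun w hw => (((hmix w hw).continuousOn isOpen_univ).mono
      (Set.subset_univ _)).lowerSemicontinuousOn)
    (fun w hw => ((hmix w hw).subset (Set.subset_univ _) (convex_closedBall a 1)).quasiconvexOn)
    (convex_stdSimplex ℝ ι) ⟨_, single_mem_stdSimplex ℝ (Classical.arbitrary ι)⟩
    (isCompact_stdSimplex ℝ ι)
    (fun x _ => (by fun_prop : Continuous fun w : ι → ℝ =>
      ∑ i, w i * f i x).continuousOn.upperSemicontinuousOn)
    (fun x _ => (hlinear x).quasiconcaveOn)
  have hball : ∀ x ∈ Metric.closedBall a 1, ⨆ i, f i a ≤ ∑ i, w i * f i x := fun x hx =>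
    (ha a').trans <| ciSup_le fun i => by
      simpa [Pi.single_apply] using hsaddle x hx _ (single_mem_stdSimplex ℝ i)
  have hlocal : IsLocalMin (fun x => ∑ i, w i * f i x) a := by
    filter_upwards [Metric.closedBall_mem_nhds a one_pos] with x hx
    exact (sum_mul_le_iSup hw _).trans (hball x hx)
  exact ⟨w, hw, fun x => (hball a (Metric.mem_closedBall_self zero_le_one)).trans
    (IsMinOn.of_isLocalMin_of_convex_univ hlocal (hmix w hw) x)⟩

end Minimax

section Quadratic

variable (A B : ℝ) {C : ℝ}

theorem quadratic_eq_completed_square (hC : C ≠ 0) (x : ℝ) :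
    A + 2 * B * x + C * x ^ 2 = A - B ^ 2 / C + C * (x + B / C) ^ 2 := by
  field_simp
  ring

theorem strictConvexOn_quadratic (hC : 0 < C) :
    StrictConvexOn ℝ Set.univ fun x : ℝ => A + 2 * B * x + C * x ^ 2 := by
  refine ⟨convex_univ, fun x _ y _ hxy α β hα hβ hαβ => ?_⟩
  have hgap : 0 < C * (α * β * (x - y) ^ 2) := by
    have := sub_ne_zero.mpr hxy
    positivity
  obtain rfl : β = 1 - α := by linarith
  simp only [smul_eq_mul]
  linear_combination hgap

theorem tendsto_quadratic_cocompact_atTop (hC : 0 < C) :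
    Filter.Tendsto (fun x : ℝ => A + 2 * B * x + C * x ^ 2) (Filter.cocompact ℝ) Filter.atTop := by
  have hshift : Filter.Tendsto (fun x : ℝ => ‖x + B / C‖) (Filter.cocompact ℝ) Filter.atTop :=
    tendsto_norm_cocompact_atTop.comp
      (Homeomorph.addRight (B / C)).isClosedEmbedding.tendsto_cocompact
  have hsq := (Filter.tendsto_pow_atTop two_ne_zero).comp hshift
  refine (Filter.tendsto_atTop_add_const_left _ (A - B ^ 2 / C) (hsq.const_mul_atTop hC)).congr
    fun x => ?_
  rw [quadratic_eq_completed_square A B hC.ne', Function.comp_apply, Real.norm_eq_abs, sq_abs]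

end Quadratic

section MaxQuadratic

variable {W : Matrix (Plot a b) (Plot a b) ℝ}

theorem qpoly_le_rfun (s : BlockArray a b t) (x : ℝ) : qpoly W s x ≤ rfun t W x :=
  Finite.le_ciSup (fun s : BlockArray a b t => qpoly W s x) s

theorem strictConvexOn_rfun [Nonempty (Fin t)] (hW : ∀ s : BlockArray a b t, 0 < cs11 W s) :
    StrictConvexOn ℝ Set.univ (rfun t W) :=
  strictConvexOn_iSup convex_univ fun s => strictConvexOn_quadratic _ _ (hW s)

theorem exists_forall_rfun_le [Nonempty (Fin t)] (hW : ∀ s : BlockArray a b t, 0 < cs11 W s) :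
    ∃ x, ∀ y, rfun t W x ≤ rfun t W y := by
  have hcont : Continuous (rfun t W) :=
    continuousOn_univ.mp ((strictConvexOn_rfun hW).convexOn.continuousOn isOpen_univ)
  have s : BlockArray a b t := Classical.arbitrary _
  exact hcont.exists_forall_le <| Filter.tendsto_atTop_mono (qpoly_le_rfun s)
    (tendsto_quadratic_cocompact_atTop _ _ (hW s))

variable {ξ : BlockArray a b t → ℝ}

theorem IsMeasure.cm11_pos (hξ : IsMeasure ξ) (hW : ∀ s : BlockArray a b t, 0 < cs11 W s) :
    0 < cm11 W ξ := by
  have hnonneg : ∀ s, 0 ≤ ξ s * cs11 W s := fun s => mul_nonneg (hξ.1 s) (hW s).le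
  obtain ⟨s, -, hs⟩ : ∃ s ∈ Finset.univ, 0 < ξ s :=
    Finset.exists_lt_of_sum_lt (by simp [hξ.2])
  exact Finset.sum_pos' (fun s _ => hnonneg s) ⟨s, Finset.mem_univ s, mul_pos hs (hW s)⟩

theorem sum_mul_qpoly (ξ : BlockArray a b t → ℝ) (x : ℝ) :
    ∑ s, ξ s * qpoly W s x = cm00 W ξ + 2 * cm01 W ξ * x + cm11 W ξ * x ^ 2 := by
  simp only [cm00, cm01, cm11, qpoly, Finset.mul_sum, Finset.sum_mul, ← Finset.sum_add_distrib]
  exact Finset.sum_congr rfl fun s _ => by ring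

theorem sum_mul_qpoly_eq_qstar_add (h : cm11 W ξ ≠ 0) (x : ℝ) :
    ∑ s, ξ s * qpoly W s x = qstar W ξ + cm11 W ξ * (x + cm01 W ξ / cm11 W ξ) ^ 2 := by
  rw [sum_mul_qpoly, quadratic_eq_completed_square _ _ h, qstar]

theorem qstar_le_rfun (hW : ∀ s : BlockArray a b t, 0 < cs11 W s) (hξ : IsMeasure ξ)
    (x : ℝ) : qstar W ξ ≤ rfun t W x := by
  have hpos := hξ.cm11_pos hW
  calc qstar W ξ ≤ ∑ s, ξ s * qpoly W s x := by
        rw [sum_mul_qpoly_eq_qstar_add hpos.ne']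
        exact le_add_of_nonneg_right (by positivity)
    _ ≤ rfun t W x := sum_mul_le_iSup hξ _

theorem isGreatest_qstar_of_forall_rfun_le [Nonempty (Fin t)]
    (hW : ∀ s : BlockArray a b t, 0 < cs11 W s) {x : ℝ} (hx : ∀ y, rfun t W x ≤ rfun t W y) :
    IsGreatest {y : ℝ | ∃ η : BlockArray a b t → ℝ, IsMeasure η ∧ qstar W η = y}
      (rfun t W x) := by
  obtain ⟨ξ, hξ, hmin⟩ : ∃ ξ : BlockArray a b t → ℝ, IsMeasure ξ ∧
      ∀ y, rfun t W x ≤ ∑ s, ξ s * qpoly W s y :=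
    exists_mem_stdSimplex_forall_iSup_le_sum
      (fun s => (strictConvexOn_quadratic _ _ (hW s)).convexOn) hx
  have hge : rfun t W x ≤ qstar W ξ := by
    have := hmin (-(cm01 W ξ / cm11 W ξ))
    simpa [sum_mul_qpoly_eq_qstar_add (hξ.cm11_pos hW).ne'] using this
  refine ⟨⟨ξ, hξ, (qstar_le_rfun hW hξ x).antisymm hge⟩, ?_⟩
  rintro _ ⟨η, hη, rfl⟩
  exact qstar_le_rfun hW hη x

end MaxQuadratic

section WeightMatrix

theorem sq_dotProduct_mulVec_lt_of_posDef {n : Type*} [Fintype n] {P : Matrix n n ℝ}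
    (hP : P.PosDef) {u v : n → ℝ} (hu : u ≠ 0) (huv : ∀ c : ℝ, v ≠ c • u) :
    (u ⬝ᵥ P *ᵥ v) ^ 2 < (u ⬝ᵥ P *ᵥ u) * (v ⬝ᵥ P *ᵥ v) := by
  have hsymm : v ⬝ᵥ P *ᵥ u = u ⬝ᵥ P *ᵥ v := by
    rw [dotProduct_mulVec, ← mulVec_transpose, ← conjTranspose_eq_transpose_of_trivial,
      hP.isHermitian.eq, dotProduct_comm]
  have hdiscrim : discrim (u ⬝ᵥ P *ᵥ u) (2 * (u ⬝ᵥ P *ᵥ v)) (v ⬝ᵥ P *ᵥ v) < 0 := by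
    refine discrim_lt_zero (hP.dotProduct_mulVec_pos hu).ne' fun c => ?_
    have hne : v + c • u ≠ 0 := fun h => huv (-c) (by rw [neg_smul, eq_neg_of_add_eq_zero_left h])
    convert hP.dotProduct_mulVec_pos hne using 1
    simp only [star_trivial, mulVec_add, mulVec_smul, dotProduct_add, add_dotProduct,
      dotProduct_smul, smul_dotProduct, smul_eq_mul, hsymm]
    ring
  unfold discrim at hdiscrim
  linarith

theorem dotProduct_Btilde_mulVec {Sig : Matrix (Plot a b) (Plot a b) ℝ} (hSig : Sig.IsHermitian)
    (v : Plot a b → ℝ) :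
    v ⬝ᵥ Btilde Sig *ᵥ v = v ⬝ᵥ Sig⁻¹ *ᵥ v - (1 ⬝ᵥ Sig⁻¹ *ᵥ 1)⁻¹ * (1 ⬝ᵥ Sig⁻¹ *ᵥ v) ^ 2 := by
  have hJ : Jmat (Plot a b) = vecMulVec 1 1 := by ext; simp [Jmat, vecMulVec]
  have hsum : ∑ i, ∑ j, Sig⁻¹ i j = 1 ⬝ᵥ Sig⁻¹ *ᵥ 1 := by simp [dotProduct, mulVec]
  have hsymm : v ⬝ᵥ Sig⁻¹ *ᵥ 1 = 1 ⬝ᵥ Sig⁻¹ *ᵥ v := by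
    rw [dotProduct_mulVec, ← mulVec_transpose, ← conjTranspose_eq_transpose_of_trivial,
      hSig.inv.eq, dotProduct_comm]
  rw [Btilde, hJ, hsum, mul_vecMulVec, vecMulVec_mul, sub_mulVec, smul_mulVec, vecMulVec_mulVec,
    dotProduct_sub, dotProduct_smul, op_smul_eq_smul, dotProduct_smul, ← dotProduct_mulVec, hsymm,
    smul_eq_mul, smul_eq_mul, sq]

theorem dotProduct_Btilde_mulVec_pos {Sig : Matrix (Plot a b) (Plot a b) ℝ} (hSig : Sig.PosDef)
    {v : Plot a b → ℝ} {q r : Plot a b} (hqr : v q ≠ v r) : 0 < v ⬝ᵥ Btilde Sig *ᵥ v := by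
  have hone : (1 : Plot a b → ℝ) ≠ 0 := fun h => one_ne_zero (congrFun h q)
  have hne : ∀ c : ℝ, v ≠ c • 1 := by
    rintro c rfl
    exact hqr rfl
  have hpos : 0 < (1 : Plot a b → ℝ) ⬝ᵥ Sig⁻¹ *ᵥ 1 := hSig.inv.dotProduct_mulVec_pos hone
  rw [dotProduct_Btilde_mulVec hSig.isHermitian, sub_pos, inv_mul_lt_iff₀ hpos]
  exact sq_dotProduct_mulVec_lt_of_posDef hSig.inv hone hne

end WeightMatrix

section Centering

variable {m n : Type*} [Fintype n]

theorem trace_transpose_mul_mul [Fintype m] (A : Matrix m n ℝ) (W : Matrix m m ℝ) :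
    (Aᵀ * W * A).trace = ∑ k, A.col k ⬝ᵥ W *ᵥ A.col k := by
  simp only [trace, diag_apply, Matrix.mul_assoc]
  rfl

variable [DecidableEq n]

theorem isSymm_Bmat : (Bmat n).IsSymm := by
  ext i j
  simp [Bmat, Jmat, Matrix.one_apply, eq_comm]

theorem mul_Bmat_apply (A : Matrix m n ℝ) (i : m) (j : n) :
    (A * Bmat n) i j = A i j - (Fintype.card n : ℝ)⁻¹ * ∑ l, A i l := by
  rw [Bmat, Matrix.mul_sub, Matrix.mul_one, Matrix.sub_apply, Matrix.mul_smul, Matrix.smul_apply]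
  simp [Jmat, Matrix.mul_apply]

theorem isIdempotentElem_Bmat : IsIdempotentElem (Bmat n) := by
  cases isEmpty_or_nonempty n
  · exact Subsingleton.elim _ _
  · ext i j
    have hrow : ∑ l, Bmat n i l = 0 := by
      simp [Bmat, Jmat, Matrix.one_apply]
    rw [mul_Bmat_apply, hrow, mul_zero, sub_zero]

theorem cs11_eq_sum (W : Matrix (Plot a b) (Plot a b) ℝ) (s : BlockArray a b t) :
    cs11 W s = ∑ k, (Fmat s * Bmat (Fin t)).col k ⬝ᵥ W *ᵥ (Fmat s * Bmat (Fin t)).col k := by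
  rw [← trace_transpose_mul_mul]
  calc cs11 W s = (Bmat (Fin t) * Bmat (Fin t) * Cs11 W s).trace := by
        rw [isIdempotentElem_Bmat.eq, cs11]
    _ = (Bmat (Fin t) * Cs11 W s * Bmat (Fin t)).trace := by
        rw [Matrix.mul_assoc, trace_mul_comm]
    _ = ((Fmat s * Bmat (Fin t))ᵀ * W * (Fmat s * Bmat (Fin t))).trace := by
        rw [transpose_mul, isSymm_Bmat.eq, Cs11]
        simp only [Matrix.mul_assoc]

end Centering

section Neighbors

open SimpleGraph

theorem neighbor_iff_adj {q r : Plot a b} :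
    Neighbor q r ↔ (pathGraph a □ pathGraph b).Adj q r := by
  simp only [Neighbor, boxProd_adj, pathGraph_adj]
  tauto

theorem Mmat_eq_adjMatrix [DecidableRel (pathGraph a □ pathGraph b).Adj] :
    Mmat a b = (pathGraph a □ pathGraph b).adjMatrix ℝ := by
  ext q r
  simp only [Mmat, of_apply, adjMatrix_apply, neighbor_iff_adj]

theorem Tmat_mulVec_one (s : BlockArray a b t) : Tmat s *ᵥ 1 = 1 := by
  ext q
  simp [Tmat, mulVec, dotProduct]

theorem sum_Fmat (s : BlockArray a b t) (q : Plot a b)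
    [Fintype ((pathGraph a □ pathGraph b).neighborSet q)] :
    ∑ k, Fmat s q k = (pathGraph a □ pathGraph b).degree q := by
  classical
  calc ∑ k, Fmat s q k = (Fmat s *ᵥ 1) q := by simp [mulVec, dotProduct]
    _ = ((pathGraph a □ pathGraph b).adjMatrix ℝ *ᵥ 1) q := by
      rw [Fmat, ← mulVec_mulVec, Tmat_mulVec_one, Mmat_eq_adjMatrix]
    _ = (pathGraph a □ pathGraph b).degree q := by
      rw [← Function.const_one, adjMatrix_mulVec_const_apply, mul_one]
      congr!

theorem exists_nat_Fmat_eq (s : BlockArray a b t) (q : Plot a b) (k : Fin t) :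
    ∃ n : ℕ, Fmat s q k = n :=
  ⟨∑ r, if Neighbor q r ∧ s r = k then 1 else 0, by
    simp [Fmat, Mmat, Tmat, Matrix.mul_apply, ← ite_and, and_comm]⟩

theorem Fmat_mul_Bmat_ne [(pathGraph a □ pathGraph b).LocallyFinite]
    (s : BlockArray a b t) (k : Fin t) {q r : Plot a b}
    (hqr : ¬ (pathGraph a □ pathGraph b).degree q ≡ (pathGraph a □ pathGraph b).degree r [MOD t]) :
    (Fmat s * Bmat (Fin t)) q k ≠ (Fmat s * Bmat (Fin t)) r k := by
  contrapose! hqr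
  obtain ⟨m, hm⟩ := exists_nat_Fmat_eq s q k
  obtain ⟨n, hn⟩ := exists_nat_Fmat_eq s r k
  have ht : (t : ℝ) ≠ 0 := Nat.cast_ne_zero.mpr k.pos.ne'
  rw [mul_Bmat_apply, mul_Bmat_apply, sum_Fmat, sum_Fmat, hm, hn, Fintype.card_fin] at hqr
  field_simp at hqr
  have hdvd : (pathGraph a □ pathGraph b).degree q + t * n =
      (pathGraph a □ pathGraph b).degree r + t * m := by
    exact_mod_cast (by linarith : ((pathGraph a □ pathGraph b).degree q + t * n : ℝ) =
      (pathGraph a □ pathGraph b).degree r + t * m)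
  calc (pathGraph a □ pathGraph b).degree q
      ≡ (pathGraph a □ pathGraph b).degree q + t * n [MOD t] := by simp [Nat.ModEq]
    _ = (pathGraph a □ pathGraph b).degree r + t * m := hdvd
    _ ≡ (pathGraph a □ pathGraph b).degree r [MOD t] := by simp [Nat.ModEq]

theorem cs11_pos_of_degree_not_modEq [(pathGraph a □ pathGraph b).LocallyFinite]
    {W : Matrix (Plot a b) (Plot a b) ℝ}
    (hW : ∀ (v : Plot a b → ℝ) (q r : Plot a b), v q ≠ v r → 0 < v ⬝ᵥ W *ᵥ v)
    {q r : Plot a b}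
    (hqr : ¬ (pathGraph a □ pathGraph b).degree q ≡ (pathGraph a □ pathGraph b).degree r [MOD t])
    (s : BlockArray a b t) : 0 < cs11 W s := by
  rw [cs11_eq_sum]
  exact Finset.sum_pos (fun k _ => hW _ q r (Fmat_mul_Bmat_ne s k hqr)) ⟨s q, Finset.mem_univ _⟩

theorem degree_pathGraph_zero {n : ℕ} (hn : 1 < n) [(pathGraph n).LocallyFinite] :
    (pathGraph n).degree ⟨0, by omega⟩ = 1 := by
  have hnbrs : (pathGraph n).neighborFinset ⟨0, by omega⟩ = {⟨1, hn⟩} := by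
    ext j
    simp [pathGraph_adj, Fin.ext_iff, eq_comm]
  rw [degree, hnbrs, Finset.card_singleton]

theorem degree_pathGraph_one {n : ℕ} (hn : 2 < n) [(pathGraph n).LocallyFinite] :
    (pathGraph n).degree ⟨1, by omega⟩ = 2 := by
  have hnbrs : (pathGraph n).neighborFinset ⟨1, by omega⟩ = {⟨0, by omega⟩, ⟨2, hn⟩} := by
    ext j
    simp only [mem_neighborFinset, pathGraph_adj, Finset.mem_insert, Finset.mem_singleton,
      Fin.ext_iff]
    omega
  rw [degree, hnbrs, Finset.card_pair (by simp)]

theorem cs11_pos (ha : 0 < a) (hb : 3 ≤ b) (ht : 2 ≤ t) {W : Matrix (Plot a b) (Plot a b) ℝ}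
    (hW : ∀ (v : Plot a b → ℝ) (q r : Plot a b), v q ≠ v r → 0 < v ⬝ᵥ W *ᵥ v)
    (s : BlockArray a b t) : 0 < cs11 W s := by
  classical
  refine cs11_pos_of_degree_not_modEq hW
    (q := (⟨0, ha⟩, ⟨0, by omega⟩)) (r := (⟨0, ha⟩, ⟨1, by omega⟩)) (fun h => ?_) s
  rw [degree_boxProd, degree_boxProd, degree_pathGraph_zero (by omega : 1 < b),
    degree_pathGraph_one hb] at h
  have hdvd : t ∣ 2 - 1 := (Nat.modEq_iff_dvd' one_le_two).mp (Nat.ModEq.add_left_cancel' _ h)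
  exact Nat.not_dvd_of_pos_of_lt one_pos ht hdvd

end Neighbors

theorem rfun_strictConvex_unique_min_general (ha : 0 < a) (hb : 3 ≤ b) (ht : 2 ≤ t)
    (W : Matrix (Plot a b) (Plot a b) ℝ)
    (hW : ∀ (v : Plot a b → ℝ) (q r : Plot a b), v q ≠ v r → 0 < v ⬝ᵥ W *ᵥ v) :
    StrictConvexOn ℝ Set.univ (rfun t W) ∧
    ∃ xstar : ℝ,
      (∀ y : ℝ, rfun t W xstar ≤ rfun t W y) ∧
      (∀ x' : ℝ, (∀ y : ℝ, rfun t W x' ≤ rfun t W y) → x' = xstar) ∧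
      IsGreatest {y : ℝ | ∃ η : BlockArray a b t → ℝ, IsMeasure η ∧ qstar W η = y}
        (rfun t W xstar) := by
  have : Nonempty (Fin t) := ⟨⟨0, by omega⟩⟩
  have hpos := cs11_pos ha hb ht hW
  have hconvex := strictConvexOn_rfun hpos
  obtain ⟨x, hx⟩ := exists_forall_rfun_le hpos
  exact ⟨hconvex, x, hx, fun x' hx' => hconvex.eq_of_isMinOn (fun y _ => hx' y) (fun y _ => hx y)
    (Set.mem_univ _) (Set.mem_univ _), isGreatest_qstar_of_forall_rfun_le hpos hx⟩

/-- `r(x) = max_{s∈S} q_s(x)` is strictly convex, attains its minimum at a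
unique point `x*`, and `r(x*)` equals the maximum of `q*_ξ` over all measures. -/
theorem rfun_strictConvex_unique_min
    (a b t : ℕ) (ha : 2 ≤ a) (hab : a ≤ b) (hb : 3 ≤ b) (ht : 2 ≤ t)
    (Sig : Matrix (Plot a b) (Plot a b) ℝ) (hSig : Sig.PosDef) :
    StrictConvexOn ℝ Set.univ (rfun t (Btilde Sig)) ∧
    ∃ xstar : ℝ,
      (∀ y : ℝ, rfun t (Btilde Sig) xstar ≤ rfun t (Btilde Sig) y) ∧
      (∀ x' : ℝ, (∀ y : ℝ, rfun t (Btilde Sig) x' ≤ rfun t (Btilde Sig) y) → x' = xstar) ∧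
      IsGreatest {y : ℝ | ∃ η : BlockArray a b t → ℝ,
          IsMeasure η ∧ qstar (Btilde Sig) η = y} (rfun t (Btilde Sig) xstar) :=
  rfun_strictConvex_unique_min_general (by omega) hb ht _ fun _ _ _ =>
    dotProduct_Btilde_mulVec_pos hSig

end TwoDim
end
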